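/- Every compact linear operator T from a Banach space X into a 𝒫_λ-space Y is infinite-nuclear. -/

import Mathlib

open Filter

universe u v

/-- A Banach space `Y` is a `𝒫_λ`-space if for all Banach spaces `W ⊆ Z` (via a linear isometric
embedding) every bounded operator `W → Y` extends to `Z` with norm at most `λ` times bigger. -/
def IsPLambdaSpace (𝕜 : Type*) [RCLike 𝕜] (Y : Type*) [NormedAddCommGroup Y]
    [NormedSpace 𝕜 Y] (lam : ℝ) : Prop :=
  ∀ (W : Type u) (Z : Type v) [NormedAddCommGroup W] [NormedSpace 𝕜 W] [CompleteSpace W]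
    [NormedAddCommGroup Z] [NormedSpace 𝕜 Z] [CompleteSpace Z]
    (i : W →ₗᵢ[𝕜] Z) (T : W →L[𝕜] Y),
    ∃ Ttilde : Z →L[𝕜] Y, (∀ w : W, Ttilde (i w) = T w) ∧ ‖Ttilde‖ ≤ lam * ‖T‖

/-- An operator `T : X → Y` is infinite-nuclear if `T x = Σₙ uₙ(x) yₙ` for some sequences `(uₙ)`
in `X*` with `‖uₙ‖ → 0` and `(yₙ)` in `Y` with `sup_{‖v‖ ≤ 1} Σₙ |v(yₙ)| < ∞`. -/
def InfiniteNuclear {𝕜 X Y : Type*} [RCLike 𝕜]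
    [NormedAddCommGroup X] [NormedSpace 𝕜 X]
    [NormedAddCommGroup Y] [NormedSpace 𝕜 Y] (T : X →L[𝕜] Y) : Prop :=
  ∃ (u : ℕ → X →L[𝕜] 𝕜) (y : ℕ → Y),
    Tendsto (fun n => ‖u n‖) atTop (nhds 0) ∧
    (∃ C : ℝ, ∀ v : Y →L[𝕜] 𝕜, ‖v‖ ≤ 1 →
      Summable (fun n => ‖v (y n)‖) ∧ (∑' n, ‖v (y n)‖) ≤ C) ∧
    (∀ x : X, HasSum (fun n => u n x • y n) (T x))

/-!
By Schauder's theorem the functionals `v ∘ T` with `‖v‖ ≤ 1` form a totally bounded set, which by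
Grothendieck lies in the closed convex hull of a null sequence `(uₙ)` in `X*`. By Hahn–Banach
`‖T x‖ ≤ supₙ |uₙ(x)|`, so `(uₙ(x))ₙ ↦ T x` is a well-defined bounded operator on a subspace of
`c₀`. It extends to `S : c₀ → Y`, and `T x = ∑ uₙ(x) S eₙ` for the unit vectors `eₙ`,
where `∑ |v (S eₙ)| = ‖v ∘ S‖` since the dual of `c₀` is `ℓ¹`.
-/

universe w

open Metric Set Topology
open scoped ZeroAtInfty

/-! ### Totally bounded sets and null sequences -/

theorem exists_seq_tendsto_of_finite_sets {α : Type*} {l : Filter α} {F : ℕ → Set α}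
    (hfin : ∀ k, (F k).Finite) (hne : ∀ k, (F k).Nonempty) (hF : Tendsto F atTop l.smallSets) :
    ∃ u : ℕ → α, Tendsto u atTop l ∧ range u = ⋃ k, F k := by
  have (k : ℕ) : Finite (F k) := hfin k
  have (k : ℕ) : Nonempty (F k) := (hne k).to_subtype
  obtain ⟨e⟩ : Nonempty (ℕ ≃ Σ k, F k) := nonempty_equiv_of_countable
  have hfst : Tendsto (Sigma.fst : (Σ k, F k) → ℕ) cofinite atTop := by
    rw [← Nat.cofinite_eq_atTop]
    refine Tendsto.cofinite_of_finite_preimage_singleton fun k ↦ ?_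
    rw [← range_sigmaMk]
    exact finite_range _
  refine ⟨fun n ↦ (e n).2, ?_, ?_⟩
  · have hsnd : Tendsto (fun i : Σ k, F k ↦ (i.2 : α)) cofinite l :=
      (hF.comp hfst).of_smallSets (.of_forall fun i ↦ i.2.2)
    rw [← Nat.cofinite_eq_atTop]
    exact hsnd.comp e.injective.tendsto_cofinite
  · rw [iUnion_eq_range_sigma]
    exact e.surjective.range_comp fun i : Σ k, F k ↦ (i.2 : α)

theorem mem_of_tendsto_of_two_pow_smul_sub_mem {E : Type*} [AddCommGroup E] [Module ℝ E]
    [TopologicalSpace E] [ContinuousAdd E] [ContinuousSMul ℝ E] {s : Set E} (hs : Convex ℝ s)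
    (hcl : IsClosed s) {f : ℕ → E} {g : E} (hf₀ : f 0 = 0) (hf : Tendsto f atTop (𝓝 g))
    (hmem : ∀ k, (2 : ℝ) ^ (k + 1) • (f (k + 1) - f k) ∈ s) : g ∈ s := by
  have hadd (k : ℕ) : ∀ x ∈ s, f k + (1 / 2 : ℝ) ^ k • x ∈ s := by
    induction k with
    | zero => simp [hf₀]
    | succ k ih =>
      intro x hx
      have hmid := hs (hmem k) hx (by norm_num : (0 : ℝ) ≤ 1 / 2)
        (by norm_num : (0 : ℝ) ≤ 1 / 2) (by norm_num)
      convert ih _ hmid using 1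
      have hpow : (1 / 2 : ℝ) ^ k * (1 / 2) * 2 ^ (k + 1) = 1 := by
        rw [← pow_succ, ← mul_pow]; norm_num
      rw [smul_add, smul_smul, smul_smul, smul_smul, hpow, one_smul, pow_succ]
      abel
  have hpow : Tendsto (fun k : ℕ ↦ (1 / 2 : ℝ) ^ k) atTop (𝓝 0) :=
    tendsto_pow_atTop_nhds_zero_of_lt_one (by norm_num) (by norm_num)
  have hlim := hf.add (hpow.smul_const ((2 : ℝ) ^ (0 + 1) • (f (0 + 1) - f 0)))
  rw [zero_smul, add_zero] at hlim
  exact hcl.mem_of_tendsto hlim (.of_forall fun k ↦ hadd k _ (hmem 0))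

section Grothendieck

variable {E : Type*} [SeminormedAddCommGroup E]

theorem exists_finite_nets {K : Set E} (hK : TotallyBounded K) :
    ∃ (c : ℝ) (N : ℕ → Set E), 0 ≤ c ∧ N 0 = {0} ∧ (∀ k, (N k).Finite) ∧
      ∀ k, ∀ g ∈ K, ∃ f ∈ N k, ‖g - f‖ ≤ c * (1 / 4) ^ k := by
  obtain ⟨c, hc, hKc⟩ := hK.isBounded.subset_ball_lt 0 0
  choose t _ htfin ht using fun k : ℕ ↦
    finite_approx_of_totallyBounded hK (c * (1 / 4) ^ k) (by positivity)
  refine ⟨c, fun | 0 => {0} | k + 1 => t (k + 1), hc.le, rfl, ?_, ?_⟩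
  · rintro (_ | k)
    exacts [finite_singleton 0, htfin (k + 1)]
  · rintro (_ | k) g hg
    · simpa using (mem_ball_zero_iff.1 (hKc hg)).le
    · obtain ⟨f, hf, hgf⟩ := mem_iUnion₂.1 (ht (k + 1) hg)
      exact ⟨f, hf, (mem_ball_iff_norm.1 hgf).le⟩

variable [NormedSpace ℝ E]

theorem two_pow_smul_sub_mem_closedBall {f : ℕ → E} {g : E} {c : ℝ}
    (hgf : ∀ k, ‖g - f k‖ ≤ c * (1 / 4) ^ k) (k : ℕ) :
    (2 : ℝ) ^ (k + 1) • (f (k + 1) - f k) ∈ closedBall 0 (5 / 2 * c * (1 / 2) ^ k) := by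
  rw [mem_closedBall_zero_iff, norm_smul, norm_pow, Real.norm_ofNat]
  calc 2 ^ (k + 1) * ‖f (k + 1) - f k‖
      ≤ 2 ^ (k + 1) * (c * (1 / 4) ^ k + c * (1 / 4) ^ (k + 1)) := by
        gcongr
        rw [← sub_sub_sub_cancel_left _ _ g]
        exact (norm_sub_le _ _).trans (add_le_add (hgf k) (hgf (k + 1)))
    _ = 5 / 2 * c * (2 * (1 / 4)) ^ k := by rw [mul_pow]; ring
    _ = 5 / 2 * c * (1 / 2) ^ k := by norm_num

-- The scaled differences of consecutive approximants of a point of `K` lie in finite sets `F k`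
-- shrinking to `0`, because nets at scale `4⁻ᵏ` beat the dyadic weights `2⁻ᵏ` of the telescope.
theorem exists_tendsto_zero_subset_closedConvexHull {K : Set E} (hK : TotallyBounded K) :
    ∃ u : ℕ → E, Tendsto u atTop (𝓝 0) ∧ K ⊆ closedConvexHull ℝ (range u) := by
  obtain ⟨c, N, hc, hN₀, hNfin, hN⟩ := exists_finite_nets hK
  let F (k : ℕ) : Set E :=
    insert 0 ((fun p : E × E ↦ (2 : ℝ) ^ (k + 1) • (p.1 - p.2)) '' (N (k + 1) ×ˢ N k) ∩
      closedBall 0 (5 / 2 * c * (1 / 2) ^ k))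
  have hpow {r : ℝ} (hr : |r| < 1) (a : ℝ) : Tendsto (fun k : ℕ ↦ a * r ^ k) atTop (𝓝 0) := by
    simpa using (tendsto_pow_atTop_nhds_zero_of_abs_lt_one hr).const_mul a
  have hF : Tendsto F atTop (𝓝 0).smallSets :=
    ((tendsto_closedBall_smallSets 0).comp (hpow (by norm_num [abs_of_pos]) _)).smallSets_mono
      (.of_forall fun k ↦ insert_subset (mem_closedBall_self (by positivity)) inter_subset_right)
  obtain ⟨u, hu, hrange⟩ := exists_seq_tendsto_of_finite_sets
    (fun k ↦ ((((hNfin (k + 1)).prod (hNfin k)).image _).inter_of_left _).insert 0)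
    (fun k ↦ insert_nonempty _ _) hF
  refine ⟨u, hu, fun g hg ↦ ?_⟩
  choose f hfN hgf using fun k ↦ hN k g hg
  have hf₀ : f 0 = 0 := by simpa [hN₀] using hfN 0
  have hf : Tendsto f atTop (𝓝 g) := by
    rw [tendsto_iff_norm_sub_tendsto_zero]
    refine squeeze_zero (fun _ ↦ norm_nonneg _) (fun k ↦ ?_)
      (hpow (r := 1 / 4) (by norm_num [abs_of_pos]) c)
    rw [norm_sub_rev]
    exact hgf k
  refine mem_of_tendsto_of_two_pow_smul_sub_mem convex_closedConvexHull isClosed_closedConvexHull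
    hf₀ hf fun k ↦ subset_closedConvexHull ?_
  rw [hrange]
  exact mem_iUnion_of_mem k (mem_insert_of_mem _
    ⟨⟨(f (k + 1), f k), ⟨hfN _, hfN _⟩, rfl⟩, two_pow_smul_sub_mem_closedBall hgf k⟩)

end Grothendieck

/-! ### Schauder's theorem on adjoints -/

theorem totallyBounded_image_of_forall_dist_lt {α β : Type*} [PseudoMetricSpace β] {f : α → β}
    {s : Set α}
    (H : ∀ ε > 0, ∃ (γ : Type w) (_ : PseudoMetricSpace γ) (h : α → γ), TotallyBounded (h '' s) ∧
      ∃ δ > 0, ∀ a ∈ s, ∀ b ∈ s, dist (h a) (h b) < δ → dist (f a) (f b) < ε) :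
    TotallyBounded (f '' s) := by
  refine Metric.totallyBounded_iff.2 fun ε hε ↦ ?_
  obtain ⟨γ, _, h, hs, δ, hδ, hdist⟩ := H ε hε
  obtain ⟨t, hts, htfin, ht⟩ :=
    exists_subset_image_finite_and.1 (finite_approx_of_totallyBounded hs δ hδ)
  refine ⟨f '' t, htfin.image f, ?_⟩
  rintro _ ⟨a, ha, rfl⟩
  obtain ⟨b, hb, hab⟩ : ∃ b ∈ t, dist (h a) (h b) < δ := by
    simpa using ht (mem_image_of_mem h ha)
  exact mem_biUnion (mem_image_of_mem f hb) (hdist a ha b (hts hb) hab)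

section Schauder

variable {𝕜 X Y : Type*} [RCLike 𝕜] [SeminormedAddCommGroup X] [NormedSpace 𝕜 X]
  [SeminormedAddCommGroup Y] [NormedSpace 𝕜 Y]

theorem norm_comp_sub_comp_le_of_net {T : X →L[𝕜] Y} {t : Set Y} {ε : ℝ}
    (ht : T '' closedBall 0 1 ⊆ ⋃ y ∈ t, ball y ε) {v w : Y →L[𝕜] 𝕜} (hv : ‖v‖ ≤ 1)
    (hw : ‖w‖ ≤ 1) (hε : 0 ≤ ε) (hvw : ∀ y ∈ t, ‖v y - w y‖ ≤ ε) :
    ‖v.comp T - w.comp T‖ ≤ 3 * ε := by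
  refine ContinuousLinearMap.opNorm_le_of_unit_norm (by positivity) fun x hx ↦ ?_
  obtain ⟨y, hy, hxy⟩ := mem_iUnion₂.1 (ht (mem_image_of_mem T (mem_closedBall_zero_iff.2 hx.le)))
  have hTxy : ‖T x - y‖ ≤ ε := (mem_ball_iff_norm.1 hxy).le
  calc ‖v (T x) - w (T x)‖ = ‖v (T x - y) - w (T x - y) + (v y - w y)‖ := by
        rw [map_sub, map_sub]; congr 1; abel
    _ ≤ ‖v (T x - y)‖ + ‖w (T x - y)‖ + ‖v y - w y‖ :=
        (norm_add_le _ _).trans (by gcongr; exact norm_sub_le _ _)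
    _ ≤ 1 * ε + 1 * ε + ε :=
        add_le_add_three (v.le_of_opNorm_le_of_le hv hTxy) (w.le_of_opNorm_le_of_le hw hTxy)
          (hvw y hy)
    _ = 3 * ε := by ring

theorem totallyBounded_image_comp_closedBall {T : X →L[𝕜] Y}
    (hT : TotallyBounded (T '' closedBall 0 1)) :
    TotallyBounded ((fun v : Y →L[𝕜] 𝕜 ↦ v.comp T) '' closedBall 0 1) := by
  refine totallyBounded_image_of_forall_dist_lt fun ε hε ↦ ?_
  obtain ⟨t, -, htfin, ht⟩ := finite_approx_of_totallyBounded hT (ε / 4) (by positivity)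
  have := htfin.fintype
  let evalNet : (Y →L[𝕜] 𝕜) →L[𝕜] t → 𝕜 :=
    ContinuousLinearMap.pi fun y ↦ ContinuousLinearMap.apply 𝕜 𝕜 (y : Y)
  have hbdd : Bornology.IsBounded (evalNet '' closedBall 0 1) :=
    evalNet.lipschitz.isBounded_image isBounded_closedBall
  refine ⟨t → 𝕜, inferInstance, evalNet,
    hbdd.isCompact_closure.totallyBounded.subset subset_closure,
    ε / 4, by positivity, fun v hv w hw hvw ↦ ?_⟩
  have hnet : ∀ y ∈ t, ‖v y - w y‖ ≤ ε / 4 := fun y hy ↦ by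
    rw [← dist_eq_norm]
    exact (dist_le_pi_dist (evalNet v) (evalNet w) ⟨y, hy⟩).trans hvw.le
  rw [mem_closedBall_zero_iff] at hv hw
  rw [dist_eq_norm]
  exact (norm_comp_sub_comp_le_of_net ht hv hw (by positivity) hnet).trans_lt (by linarith)

theorem exists_tendsto_zero_norm_apply_le {T : X →L[𝕜] Y}
    (hT : TotallyBounded (T '' closedBall 0 1)) :
    ∃ u : ℕ → X →L[𝕜] 𝕜, Tendsto u atTop (𝓝 0) ∧
      ∀ (x : X) (M : ℝ), (∀ n, ‖u n x‖ ≤ M) → ‖T x‖ ≤ M := by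
  obtain ⟨u, hu, hhull⟩ :=
    exists_tendsto_zero_subset_closedConvexHull (totallyBounded_image_comp_closedBall hT)
  refine ⟨u, hu, fun x M hM ↦ ?_⟩
  obtain ⟨v, hv, hvx⟩ := exists_dual_vector'' 𝕜 (T x)
  let evalAt : (X →L[𝕜] 𝕜) →L[ℝ] 𝕜 := (ContinuousLinearMap.apply 𝕜 𝕜 x).restrictScalars ℝ
  have hsub : closedConvexHull ℝ (range u) ⊆ evalAt ⁻¹' closedBall 0 M :=
    closedConvexHull_min (range_subset_iff.2 fun n ↦ mem_closedBall_zero_iff.2 (hM n))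
      ((convex_closedBall 0 M).linear_preimage evalAt.toLinearMap)
      (isClosed_closedBall.preimage evalAt.continuous)
  have hvM : ‖v (T x)‖ ≤ M := mem_closedBall_zero_iff.1
    (hsub (hhull (mem_image_of_mem _ (mem_closedBall_zero_iff.2 hv))))
  simpa [hvx] using hvM

end Schauder

/-! ### The space `c₀` -/

section CZero

variable {ι : Type*} [TopologicalSpace ι]

theorem czero_norm_apply_le {β : Type*} [SeminormedAddCommGroup β] (a : C₀(ι, β)) (i : ι) :
    ‖a i‖ ≤ ‖a‖ :=
  a.toBCF.norm_coe_le_norm i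

theorem czero_norm_le {β : Type*} [SeminormedAddCommGroup β] {a : C₀(ι, β)} {M : ℝ} (hM : 0 ≤ M)
    (h : ∀ i, ‖a i‖ ≤ M) : ‖a‖ ≤ M :=
  (BoundedContinuousFunction.norm_le (f := a.toBCF) hM).2 h

variable [DiscreteTopology ι]

theorem czero_tendsto_cofinite {β : Type*} [TopologicalSpace β] [Zero β] (a : C₀(ι, β)) :
    Tendsto a cofinite (𝓝 0) :=
  cocompact_eq_cofinite ι ▸ a.zero_at_infty'

/-- The operator `x ↦ (uᵢ x)ᵢ` into `c₀` given by a null family of functionals, through which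
operators dominated by the family factor. -/
def coordCZero {𝕜 X : Type*} [NontriviallyNormedField 𝕜] [SeminormedAddCommGroup X]
    [NormedSpace 𝕜 X] (u : ι → X →L[𝕜] 𝕜) (hu : Tendsto u cofinite (𝓝 0)) :
    X →ₗ[𝕜] C₀(ι, 𝕜) where
  toFun x :=
    { toFun i := u i x
      continuous_toFun := continuous_of_discreteTopology
      zero_at_infty' := by
        rw [cocompact_eq_cofinite]
        simpa [Function.comp_def] using
          ((ContinuousLinearMap.apply 𝕜 𝕜 x).continuous.tendsto 0).comp hu }
  map_add' x y := by ext; simp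
  map_smul' c x := by ext; simp

theorem coordCZero_apply {𝕜 X : Type*} [NontriviallyNormedField 𝕜] [SeminormedAddCommGroup X]
    [NormedSpace 𝕜 X] {u : ι → X →L[𝕜] 𝕜} (hu : Tendsto u cofinite (𝓝 0)) (x : X) (i : ι) :
    coordCZero u hu x i = u i x :=
  rfl

variable [DecidableEq ι]

/-- The `i`-th unit vector of `c₀`; its image under an extension to `c₀` is the vector `yᵢ` of a
nuclear representation. -/
def unitCZero (𝕜 : Type*) [TopologicalSpace 𝕜] [Zero 𝕜] [One 𝕜] (i : ι) : C₀(ι, 𝕜) where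
  toFun := Pi.single i 1
  continuous_toFun := continuous_of_discreteTopology
  zero_at_infty' := by
    rw [cocompact_eq_cofinite]
    refine tendsto_const_nhds.congr' ?_
    filter_upwards [(finite_singleton i).eventually_cofinite_notMem] with j hj
    exact (Pi.single_eq_of_ne (M := fun _ ↦ 𝕜) hj 1).symm

theorem sum_smul_unitCZero_apply {𝕜 : Type*} [NormedField 𝕜] (s : Finset ι) (c : ι → 𝕜) (j : ι) :
    (∑ i ∈ s, c i • unitCZero 𝕜 i) j = if j ∈ s then c j else 0 := by
  let evalAt : C₀(ι, 𝕜) →+ 𝕜 := ⟨⟨fun a ↦ a j, rfl⟩, fun _ _ ↦ rfl⟩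
  refine (map_sum evalAt _ s).trans ?_
  change ∑ i ∈ s, c i * (Pi.single i 1 : ι → 𝕜) j = _
  simp [Pi.single_apply]

theorem hasSum_smul_unitCZero {𝕜 : Type*} [NormedField 𝕜] (a : C₀(ι, 𝕜)) :
    HasSum (fun i ↦ a i • unitCZero 𝕜 i) a := by
  rw [HasSum, SummationFilter.unconditional_filter, Metric.tendsto_atTop]
  intro ε hε
  have hfin : {i | ¬‖a i‖ ≤ ε / 2}.Finite :=
    (czero_tendsto_cofinite a).norm.eventually_le_const (by simpa using half_pos hε)
  refine ⟨hfin.toFinset, fun s hs ↦ ?_⟩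
  rw [dist_eq_norm]
  refine (czero_norm_le (half_pos hε).le fun j ↦ ?_).trans_lt (half_lt_self hε)
  rw [ZeroAtInftyContinuousMap.sub_apply, sum_smul_unitCZero_apply]
  split_ifs with hj
  · simpa using (half_pos hε).le
  · have hj' : ‖a j‖ ≤ ε / 2 := by_contra fun h ↦ hj (hs (hfin.mem_toFinset.2 h))
    simpa using hj'

theorem sum_norm_apply_unitCZero_le {𝕜 : Type*} [RCLike 𝕜] (φ : C₀(ι, 𝕜) →L[𝕜] 𝕜)
    (s : Finset ι) : ∑ i ∈ s, ‖φ (unitCZero 𝕜 i)‖ ≤ ‖φ‖ := by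
  choose c hc hcφ using fun i ↦ RCLike.exists_norm_eq_mul_self (φ (unitCZero 𝕜 i))
  have hφ : φ (∑ i ∈ s, c i • unitCZero 𝕜 i) = (∑ i ∈ s, ‖φ (unitCZero 𝕜 i)‖ : ℝ) := by
    simp only [map_sum, map_smul, smul_eq_mul, hcφ]
  have hnorm : ‖∑ i ∈ s, c i • unitCZero 𝕜 i‖ ≤ 1 := czero_norm_le zero_le_one fun j ↦ by
    rw [sum_smul_unitCZero_apply]
    split_ifs <;> simp [hc]
  calc ∑ i ∈ s, ‖φ (unitCZero 𝕜 i)‖ = ‖φ (∑ i ∈ s, c i • unitCZero 𝕜 i)‖ := by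
        rw [hφ, RCLike.norm_of_nonneg (by positivity)]
    _ ≤ ‖φ‖ := φ.unit_le_opNorm _ hnorm

end CZero

theorem small_of_rclike (𝕜 : Type*) [RCLike 𝕜] : Small.{w} 𝕜 :=
  small_of_injective (β := ℝ × ℝ) (f := fun z ↦ (RCLike.re z, RCLike.im z))
    fun _ _ h ↦ RCLike.ext (Prod.mk.inj h).1 (Prod.mk.inj h).2

theorem small_czero (ι β : Type*) [TopologicalSpace ι] [Small.{w} ι] [TopologicalSpace β] [Zero β]
    [Small.{w} β] : Small.{w} C₀(ι, β) :=
  small_of_injective (DFunLike.coe_injective (F := C₀(ι, β)))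

/-! ### Extension of operators -/

section Extension

theorem exists_extension_topologicalClosure {𝕜 E Y : Type*} [NontriviallyNormedField 𝕜]
    [SeminormedAddCommGroup E] [NormedSpace 𝕜 E] [NormedAddCommGroup Y] [NormedSpace 𝕜 Y]
    [CompleteSpace Y] (W : Submodule 𝕜 E) (R : W →L[𝕜] Y) :
    ∃ S : W.topologicalClosure →L[𝕜] Y,
      ∀ w : W, S (Submodule.inclusion W.le_topologicalClosure w) = R w := by
  have hdense : DenseRange (Submodule.inclusion W.le_topologicalClosure) :=
    denseRange_inclusion_iff W.le_topologicalClosure |>.2 subset_rfl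
  exact ⟨_, LinearMap.extendOfNorm_eq (f := (R : W →ₗ[𝕜] Y)) hdense ⟨‖R‖, R.le_opNorm⟩⟩

variable {𝕜 Y : Type*} [RCLike 𝕜] [NormedAddCommGroup Y] [NormedSpace 𝕜 Y]

/-- The extension property for subspaces of `c₀`: every bounded operator into `Y` defined on a
subspace of `c₀`, closed or not, extends to a bounded operator on `c₀`, with no control on the norm.
It makes an operator into `Y` that is dominated by a null sequence of functionals factor through
`c₀`. -/
def HasCZeroExtension (𝕜 Y : Type*) [RCLike 𝕜] [NormedAddCommGroup Y] [NormedSpace 𝕜 Y] : Prop :=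
  ∀ (W : Submodule 𝕜 C₀(ℕ, 𝕜)) (R : W →L[𝕜] Y), ∃ S : C₀(ℕ, 𝕜) →L[𝕜] Y, ∀ w : W, S w = R w

/-- The linear isometry from the copy of a small normed space in another universe, used to apply a
property stated in that universe. -/
noncomputable def shrinkLinearIsometryEquiv (𝕜 E : Type*) [NormedField 𝕜] [NormedAddCommGroup E]
    [NormedSpace 𝕜 E] [Small.{w} E] : Shrink.{w} E ≃ₗᵢ[𝕜] E where
  toLinearEquiv := Shrink.linearEquiv 𝕜 E
  norm_map' _ := rfl

theorem completeSpace_shrink (𝕜 E : Type*) [NormedField 𝕜] [NormedAddCommGroup E]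
    [NormedSpace 𝕜 E] [CompleteSpace E] [Small.{w} E] : CompleteSpace (Shrink.{w} E) :=
  let e := shrinkLinearIsometryEquiv.{w} 𝕜 E
  (completeSpace_congr e.isometry.isUniformEmbedding (e := e.toEquiv)).2 inferInstance

-- `IsPLambdaSpace` speaks of spaces in two fixed universes, so `E` and `F` are replaced by their
-- copies there.
theorem IsPLambdaSpace.exists_extension_of_small {lam : ℝ} (hY : IsPLambdaSpace.{u, v} 𝕜 Y lam)
    {E F : Type*} [NormedAddCommGroup E] [NormedSpace 𝕜 E] [CompleteSpace E] [Small.{u} E]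
    [NormedAddCommGroup F] [NormedSpace 𝕜 F] [CompleteSpace F] [Small.{v} F]
    (i : E →ₗᵢ[𝕜] F) (R : E →L[𝕜] Y) : ∃ S : F →L[𝕜] Y, ∀ x, S (i x) = R x := by
  have := completeSpace_shrink.{u} 𝕜 E
  have := completeSpace_shrink.{v} 𝕜 F
  let eE := shrinkLinearIsometryEquiv.{u} 𝕜 E
  let eF := shrinkLinearIsometryEquiv.{v} 𝕜 F
  obtain ⟨S, hS, -⟩ := hY (Shrink.{u} E) (Shrink.{v} F)
    (eF.symm.toLinearIsometry.comp (i.comp eE.toLinearIsometry))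
    (R.comp (eE.toContinuousLinearEquiv : Shrink.{u} E →L[𝕜] E))
  refine ⟨S.comp (eF.symm.toContinuousLinearEquiv : F →L[𝕜] Shrink.{v} F), fun x ↦ ?_⟩
  simpa using hS (eE.symm x)

theorem IsPLambdaSpace.hasCZeroExtension [CompleteSpace Y] {lam : ℝ}
    (hY : IsPLambdaSpace.{u, v} 𝕜 Y lam) : HasCZeroExtension 𝕜 Y := by
  intro W R
  obtain ⟨R', hR'⟩ := exists_extension_topologicalClosure W R
  have := small_of_rclike.{u} 𝕜
  have := small_of_rclike.{v} 𝕜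
  have := small_czero.{u} ℕ 𝕜
  have := small_czero.{v} ℕ 𝕜
  have : CompleteSpace W.topologicalClosure := W.isClosed_topologicalClosure.completeSpace_coe
  obtain ⟨S, hS⟩ := hY.exists_extension_of_small W.topologicalClosure.subtypeₗᵢ R'
  exact ⟨S, fun w ↦ (hS _).trans (hR' w)⟩

end Extension

section Factorization

variable {𝕜 X Y : Type*} [RCLike 𝕜] [NormedAddCommGroup X] [NormedSpace 𝕜 X]
  [NormedAddCommGroup Y] [NormedSpace 𝕜 Y]

theorem infiniteNuclear_of_factor_czero {T : X →L[𝕜] Y} {u : ℕ → X →L[𝕜] 𝕜}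
    (hu : Tendsto u cofinite (𝓝 0)) (S : C₀(ℕ, 𝕜) →L[𝕜] Y)
    (hST : ∀ x, S (coordCZero u hu x) = T x) : InfiniteNuclear T := by
  refine ⟨u, fun n ↦ S (unitCZero 𝕜 n), ?_, ⟨‖S‖, fun v hv ↦ ?_⟩, fun x ↦ ?_⟩
  · rw [Nat.cofinite_eq_atTop] at hu
    exact tendsto_zero_iff_norm_tendsto_zero.1 hu
  · have hsum (s : Finset ℕ) : ∑ n ∈ s, ‖v (S (unitCZero 𝕜 n))‖ ≤ ‖S‖ :=
      calc ∑ n ∈ s, ‖v (S (unitCZero 𝕜 n))‖ ≤ ‖v.comp S‖ :=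
            sum_norm_apply_unitCZero_le (v.comp S) s
        _ ≤ ‖v‖ * ‖S‖ := v.opNorm_comp_le S
        _ ≤ ‖S‖ := mul_le_of_le_one_left (norm_nonneg S) hv
    have hsummable := summable_of_sum_le (fun n ↦ norm_nonneg (v (S (unitCZero 𝕜 n)))) hsum
    exact ⟨hsummable, hsummable.tsum_le_of_sum_le hsum⟩
  · rw [← hST]
    simpa only [map_smul, coordCZero_apply] using (hasSum_smul_unitCZero (coordCZero u hu x)).mapL S

theorem compact_to_PLambda_infiniteNuclear_general (hY : HasCZeroExtension 𝕜 Y) (T : X →L[𝕜] Y)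
    (hT : TotallyBounded (T '' closedBall 0 1)) : InfiniteNuclear T := by
  obtain ⟨u, hu, hTu⟩ := exists_tendsto_zero_norm_apply_le hT
  rw [← Nat.cofinite_eq_atTop] at hu
  let A := coordCZero u hu
  have hTA (x : X) : ‖T x‖ ≤ 1 * ‖A x‖ := by
    rw [one_mul]
    exact hTu x _ fun n ↦ czero_norm_apply_le (A x) n
  obtain ⟨S, hS⟩ := hY A.range ((T : X →ₗ[𝕜] Y).compLeftInverse A)
  refine infiniteNuclear_of_factor_czero hu S fun x ↦ ?_
  exact (hS ⟨A x, x, rfl⟩).trans (LinearMap.compLeftInverse_apply_of_bdd _ _ ⟨1, hTA⟩ x _ rfl)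

end Factorization

/-- Every compact operator from a Banach space into a `𝒫_λ`-space is infinite-nuclear. -/
theorem compact_to_PLambda_infiniteNuclear {𝕜 X Y : Type*} [RCLike 𝕜]
    [NormedAddCommGroup X] [NormedSpace 𝕜 X] [CompleteSpace X]
    [NormedAddCommGroup Y] [NormedSpace 𝕜 Y] [CompleteSpace Y]
    (lam : ℝ) (hlam : 1 ≤ lam) (hY : IsPLambdaSpace.{u, v} 𝕜 Y lam)
    (T : X →L[𝕜] Y) (hT : IsCompactOperator T) :
    InfiniteNuclear T := by
  have hK := hT.isCompact_closure_image_closedBall (f := (T : X →ₗ[𝕜] Y)) 1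
  exact compact_to_PLambda_infiniteNuclear_general hY.hasCZeroExtension T
    (hK.totallyBounded.subset subset_closure)
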